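/- arXiv:1608.06423 — 5 statements merged into one kernel-verified Lean document; each statement's English description precedes it below -/
import Mathlib

section
/- Let m, m', Q, Q' be positive integers and let a, a', u, v be integers with Qau + mv = 1 and am' − a'm ≠ 0. Let τ = x + iy with x = (amQ + a'm'Q')/(m²Q + m'²Q') and y = √(QQ')·|am' − a'm|/(m²Q + m'²Q'). Then (Quτ + v)/(−Qmτ + Qa) = (Qa'u + m'v)/(Q·(am' − a'm)) + i/(√(QQ')·|am' − a'm|). -/
/-- Image of the optimal splitting point between two cusps under the
Atkin–Lehner involution `W_r`. -/
theorem atkin_lehner_image_two_cusps (m m' Q Q' : ℤ)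
    (hm : 0 < m) (hm' : 0 < m') (hQ : 0 < Q) (hQ' : 0 < Q')
    (a a' u v : ℤ) (h : Q * a * u + m * v = 1) (hd : a * m' - a' * m ≠ 0) :
    let x : ℝ := ((a : ℝ) * m * Q + (a' : ℝ) * m' * Q') /
      ((m : ℝ) ^ 2 * Q + (m' : ℝ) ^ 2 * Q')
    let y : ℝ := Real.sqrt ((Q : ℝ) * (Q' : ℝ)) * |(a : ℝ) * m' - (a' : ℝ) * m| /
      ((m : ℝ) ^ 2 * Q + (m' : ℝ) ^ 2 * Q')
    let τ : ℂ := (x : ℂ) + (y : ℂ) * Complex.I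
    ((Q : ℂ) * u * τ + v) / (-(Q : ℂ) * m * τ + Q * a) =
      ((Q * a' * u + m' * v : ℤ) : ℂ) / ((Q : ℂ) * ((a : ℂ) * m' - (a' : ℂ) * m)) +
        Complex.I / ((Real.sqrt ((Q : ℝ) * (Q' : ℝ)) : ℂ) *
          ((|(a : ℝ) * m' - (a' : ℝ) * m| : ℝ) : ℂ)) := by
  intro x y τ
  have hQR : (0 : ℝ) < Q := by exact_mod_cast hQ
  have hQR' : (0 : ℝ) < Q' := by exact_mod_cast hQ'
  have hmR : (0 : ℝ) < m := by exact_mod_cast hm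
  have hmR' : (0 : ℝ) < m' := by exact_mod_cast hm'
  have hdR : (a : ℝ) * m' - (a' : ℝ) * m ≠ 0 := by exact_mod_cast hd
  have hNR : (m : ℝ) ^ 2 * Q + (m' : ℝ) ^ 2 * Q' ≠ 0 := by positivity
  have hN : (m : ℂ) ^ 2 * Q + (m' : ℂ) ^ 2 * Q' ≠ 0 := by exact_mod_cast hNR
  have hD : (a : ℂ) * m' - (a' : ℂ) * m ≠ 0 := by exact_mod_cast hd
  have hQC : (Q : ℂ) ≠ 0 := by exact_mod_cast hQ.ne'
  have hQC' : (Q' : ℂ) ≠ 0 := by exact_mod_cast hQ'.ne'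
  have hh : (Q : ℂ) * a * u + m * v = 1 := by exact_mod_cast h
  obtain ⟨t, ht⟩ : ∃ t : ℝ, t = Real.sqrt ((Q : ℝ) * (Q' : ℝ)) * |(a : ℝ) * m' - (a' : ℝ) * m| :=
    ⟨_, rfl⟩
  have htpos : 0 < t := by rw [ht]; positivity
  have ht2R : t ^ 2 = Q * Q' * ((a : ℝ) * m' - (a' : ℝ) * m) ^ 2 := by
    rw [ht, mul_pow, Real.sq_sqrt (by positivity), sq_abs]
  have ht2 : (t : ℂ) ^ 2 = Q * Q' * ((a : ℂ) * m' - (a' : ℂ) * m) ^ 2 := by exact_mod_cast ht2R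
  have htC : (t : ℂ) ≠ 0 := by exact_mod_cast htpos.ne'
  have hI : Complex.I ^ 2 = -1 := Complex.I_sq
  have hτ : τ = ((a : ℂ) * m * Q + a' * m' * Q' + t * Complex.I) /
      ((m : ℂ) ^ 2 * Q + (m' : ℂ) ^ 2 * Q') := by
    simp only [τ, x, y, ← ht]
    push_cast
    ring
  rw [← Complex.ofReal_mul, ← ht, hτ]
  clear_value τ
  push_cast
  generalize hNe : (m : ℂ) ^ 2 * Q + (m' : ℂ) ^ 2 * Q' = N at *
  generalize hDe : (a : ℂ) * m' - (a' : ℂ) * m = D at *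
  have hE : (m' : ℂ) * Q' * D - Complex.I * m * t ≠ 0 := by
    intro h0
    have : (Q' : ℂ) * D ^ 2 * N = 0 := by
      have h1 : ((m' : ℂ) * Q' * D - Complex.I * m * t) *
        (m' * Q' * D + Complex.I * m * t) = 0 := by rw [h0, zero_mul]
      linear_combination h1 + m ^ 2 * t ^ 2 * hI - m ^ 2 * ht2 - Q' * D ^ 2 * hNe
    exact (mul_ne_zero (mul_ne_zero hQC' (pow_ne_zero 2 hD)) hN) this
  have hden : -(Q : ℂ) * m * (((a : ℂ) * m * Q + a' * m' * Q' + t * Complex.I) / N) + Q * a =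
      Q * (m' * Q' * D - Complex.I * m * t) / N := by
    field_simp
    linear_combination -a * hNe + m' * Q' * hDe
  have hnum : (Q : ℂ) * u * (((a : ℂ) * m * Q + a' * m' * Q' + t * Complex.I) / N) + v =
      (Q * u * ((a : ℂ) * m * Q + a' * m' * Q' + t * Complex.I) + v * N) / N := by
    field_simp
  have key : (Q * u * ((a : ℂ) * m * Q + a' * m' * Q' + t * Complex.I) + v * N) * (D * t) =
      ((Q * a' * u + m' * v) * t + Complex.I * Q * D) * (m' * Q' * D - Complex.I * m * t) := by
    subst hNe
    subst hDe
    linear_combination (Q * m * (a * m' - a' * m) * t + Complex.I * m' * t ^ 2) * hh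
      + Q * m * (a * m' - a' * m) * t * hI + Complex.I * m' * ht2
  rw [hden, hnum, div_div_div_cancel_right₀ hN, div_add_div _ _ (mul_ne_zero hQC hD) htC,
    div_eq_div_iff (mul_ne_zero hQC hE) (mul_ne_zero (mul_ne_zero hQC hD) htC)]
  linear_combination Q * key
end

section
/- Let N ≥ 1 be a real number, set C = √N/(2π), and let γ: ℝ² → ℝ be defined by γ(x, y) = C·(g(|x|) + g(|y|)) where g(s) = s·log(s√N) for s > 0 and g(0) = 0. Let L be a nonempty subset of ℤ² not containing the origin. Let (x₀, y₀) ∈ L be a point at which γ attains its minimum over L, and let (x₁, y₁) ∈ L be a point at which |x| + |y| attains its minimum over L; set A = |x₁| + |y₁| and assume A√N > 2. Then γ(x₁, y₁)·log(A√N/2) ≤ γ(x₀, y₀)·log(A√N); in particular γ(x₁, y₁)/γ(x₀, y₀) ≤ 1/(1 − log 2/log(A√N)). -/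
lemma aux_tangent (t m : ℝ) (ht : 0 ≤ t) (hm : 0 < m) :
    t * Real.log m + t - m ≤ t * Real.log t := by
  rcases ht.eq_or_lt with rfl | ht
  · simp; exact hm.le
  · have h := Real.log_le_sub_one_of_pos (div_pos hm ht)
    rw [Real.log_div hm.ne' ht.ne'] at h
    have h2 := mul_le_mul_of_nonneg_left h ht.le
    have h3 : t * (m / t - 1) = m - t := by field_simp
    rw [h3] at h2
    linarith

lemma aux_upper (a A r : ℝ) (ha : 0 ≤ a) (haA : a ≤ A) (hr : 0 < r) :
    a * Real.log (a * r) ≤ a * Real.log (A * r) := by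
  rcases ha.eq_or_lt with rfl | ha
  · simp
  · exact mul_le_mul_of_nonneg_left
      (Real.log_le_log (by positivity) (by gcongr)) ha.le

lemma aux_lower (c d r : ℝ) (hc : 0 ≤ c) (hd : 0 ≤ d) (hcd : 0 < c + d) (hr : 0 < r) :
    (c + d) * Real.log ((c + d) * r / 2) ≤ c * Real.log (c * r) + d * Real.log (d * r) := by
  have hm : 0 < (c + d) * r / 2 := by positivity
  have h1 := aux_tangent (c * r) _ (by positivity) hm
  have h2 := aux_tangent (d * r) _ (by positivity) hm
  refine le_of_mul_le_mul_right ?_ hr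
  nlinarith

/-- Minimizing the ℓ¹-norm is asymptotically as good as minimizing the cost
function `γ(x,y) = (√N/(2π))·(|x|log(|x|√N) + |y|log(|y|√N))`. -/
theorem l1_min_vs_cost_min (N : ℝ) (hN : 1 ≤ N)
    (g : ℝ → ℝ) (hg : ∀ s : ℝ, 0 < s → g s = s * Real.log (s * Real.sqrt N))
    (hg0 : g 0 = 0)
    (γ : ℝ → ℝ → ℝ)
    (hγ : ∀ x y : ℝ, γ x y = Real.sqrt N / (2 * Real.pi) * (g |x| + g |y|))
    (L : Set (ℤ × ℤ)) (hL : L.Nonempty) (h0 : (0, 0) ∉ L)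
    (p₀ : ℤ × ℤ) (hp₀ : p₀ ∈ L)
    (hmin₀ : ∀ p ∈ L, γ (p₀.1 : ℝ) (p₀.2 : ℝ) ≤ γ (p.1 : ℝ) (p.2 : ℝ))
    (p₁ : ℤ × ℤ) (hp₁ : p₁ ∈ L)
    (hmin₁ : ∀ p ∈ L, |p₁.1| + |p₁.2| ≤ |p.1| + |p.2|)
    (A : ℝ) (hA : A = (|p₁.1| : ℝ) + (|p₁.2| : ℝ)) (hA2 : 2 < A * Real.sqrt N) :
    γ (p₁.1 : ℝ) (p₁.2 : ℝ) * Real.log (A * Real.sqrt N / 2) ≤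
      γ (p₀.1 : ℝ) (p₀.2 : ℝ) * Real.log (A * Real.sqrt N) ∧
    γ (p₁.1 : ℝ) (p₁.2 : ℝ) / γ (p₀.1 : ℝ) (p₀.2 : ℝ) ≤
      1 / (1 - Real.log 2 / Real.log (A * Real.sqrt N)) := by
  set r := Real.sqrt N with hr_def
  have hr : 0 < r := Real.sqrt_pos.mpr (by linarith)
  have hg' : ∀ s : ℝ, 0 ≤ s → g s = s * Real.log (s * r) := by
    intro s hs
    rcases hs.eq_or_lt with rfl | hs
    · simp [hg0]
    · exact hg s hs
  have hApos : 0 < A := by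
    by_contra hcon
    have := mul_nonpos_of_nonpos_of_nonneg (not_lt.mp hcon) hr.le
    linarith
  have hAB : A ≤ |(p₀.1 : ℝ)| + |(p₀.2 : ℝ)| := by
    rw [hA]
    exact_mod_cast hmin₁ p₀ hp₀
  have hC : 0 < r / (2 * Real.pi) := by positivity
  rw [hγ, hγ, hg' _ (abs_nonneg _), hg' _ (abs_nonneg _), hg' _ (abs_nonneg _),
    hg' _ (abs_nonneg _)]
  have ha := abs_nonneg (p₁.1 : ℝ)
  have hb := abs_nonneg (p₁.2 : ℝ)
  have hc := abs_nonneg (p₀.1 : ℝ)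
  have hd := abs_nonneg (p₀.2 : ℝ)
  generalize |(p₁.1 : ℝ)| = a at *
  generalize |(p₁.2 : ℝ)| = b at *
  generalize |(p₀.1 : ℝ)| = c at *
  generalize |(p₀.2 : ℝ)| = d at *
  have hl : 0 < Real.log (A * r / 2) := Real.log_pos (by linarith)
  have hl2 : 0 < Real.log (A * r) := Real.log_pos (by linarith)
  have hleq : Real.log (A * r / 2) = Real.log (A * r) - Real.log 2 :=
    Real.log_div (by positivity) (by norm_num)
  have hup : a * Real.log (a * r) + b * Real.log (b * r) ≤ A * Real.log (A * r) := by
    have h1 := aux_upper a A r ha (by linarith) hr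
    have h2 := aux_upper b A r hb (by linarith) hr
    have h3 : A * Real.log (A * r) = a * Real.log (A * r) + b * Real.log (A * r) := by
      rw [← add_mul, ← hA]
    linarith
  have hlow : A * Real.log (A * r / 2) ≤ c * Real.log (c * r) + d * Real.log (d * r) := by
    refine le_trans ?_ (aux_lower c d r hc hd (by linarith) hr)
    exact mul_le_mul hAB (Real.log_le_log (by positivity) (by gcongr)) hl.le (by linarith)
  generalize a * Real.log (a * r) + b * Real.log (b * r) = U at *
  generalize c * Real.log (c * r) + d * Real.log (d * r) = V at *
  have hV : 0 < V := lt_of_lt_of_le (by positivity) hlow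
  have main : r / (2 * Real.pi) * U * Real.log (A * r / 2) ≤
      r / (2 * Real.pi) * V * Real.log (A * r) := by
    rw [mul_assoc, mul_assoc]
    refine mul_le_mul_of_nonneg_left ?_ hC.le
    have h1 := mul_le_mul_of_nonneg_right hup hl.le
    have h2 := mul_le_mul_of_nonneg_right hlow hl2.le
    linarith
  refine ⟨main, ?_⟩
  have h1 : 1 / (1 - Real.log 2 / Real.log (A * r)) =
      Real.log (A * r) / Real.log (A * r / 2) := by
    rw [one_sub_div hl2.ne', one_div_div, hleq]
  rw [h1, div_le_div_iff₀ (by positivity) hl]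
  linarith
end

section
/- Let N be a positive integer and let u, v be integers. Let (x, y) be a nonzero element of Λ_{(u:v)} such that for every integer b > 1 it is not the case that b divides both x and y with (x/b, y/b) ∈ Λ_{(u:v)}. Then gcd(x, y) divides N. -/
/-- The lattice of integer representatives of the point `(u : v)` of `ℙ¹(ℤ/Nℤ)`. -/
def repLattice (N : ℕ) (u v : ℤ) : Set (ℤ × ℤ) := {p | (N : ℤ) ∣ p.1 * v - p.2 * u}

/-- The content of a primitive-in-the-lattice vector of `Λ_{(u:v)}` divides `N`. -/
theorem content_dvd_level (N : ℕ) (hN : 0 < N) (u v : ℤ) (x y : ℤ)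
    (hmem : (x, y) ∈ repLattice N u v) (hne : ¬(x = 0 ∧ y = 0))
    (hprim : ∀ b : ℤ, 1 < b → ¬(b ∣ x ∧ b ∣ y ∧ (x / b, y / b) ∈ repLattice N u v)) :
    (Int.gcd x y : ℤ) ∣ (N : ℤ) := by
  obtain ⟨x', hx⟩ : (Int.gcd x y : ℤ) ∣ x := Int.gcd_dvd_left ..
  obtain ⟨y', hy⟩ : (Int.gcd x y : ℤ) ∣ y := Int.gcd_dvd_right ..
  have hg0 : 0 < Int.gcd x y := Int.gcd_pos_iff.2 (by tauto)
  generalize Int.gcd x y = g at *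
  obtain ⟨b, hb⟩ := Nat.gcd_dvd_left g N
  obtain ⟨M, hM⟩ := Nat.gcd_dvd_right g N
  have hd : 0 < Nat.gcd g N := Nat.gcd_pos_of_pos_right _ hN
  have hcop : Nat.Coprime b M := by
    have h := Nat.gcd_mul_left (Nat.gcd g N) b M
    rw [← hb, ← hM] at h
    exact Nat.eq_of_mul_eq_mul_left hd (by rw [mul_one]; exact h.symm)
  have hdN : Nat.gcd g N ∣ N := Nat.gcd_dvd_right g N
  generalize Nat.gcd g N = d at *
  have hb0 : 0 < b := by
    rcases Nat.eq_zero_or_pos b with h | h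
    · subst h; omega
    · exact h
  have hbz : (b : ℤ) ≠ 0 := by positivity
  have hdz : (d : ℤ) ≠ 0 := by positivity
  have hL : (M : ℤ) ∣ x' * v - y' * u := by
    have h1 : (N : ℤ) ∣ x * v - y * u := hmem
    rw [hx, hy, hM, hb] at h1
    push_cast at h1
    have h2 : (d : ℤ) * M ∣ d * (b * (x' * v - y' * u)) := by
      convert h1 using 1; ring
    have h3 := (mul_dvd_mul_iff_left hdz).1 h2
    exact (Nat.isCoprime_iff_coprime.2 hcop).symm.dvd_of_dvd_mul_left h3
  have hxb : x = b * (d * x') := by rw [hx, hb]; push_cast; ring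
  have hyb : y = b * (d * y') := by rw [hy, hb]; push_cast; ring
  have hb1 : ¬ 1 < b := by
    intro h
    refine hprim b (by exact_mod_cast h) ⟨⟨_, hxb⟩, ⟨_, hyb⟩, ?_⟩
    rw [hxb, hyb, Int.mul_ediv_cancel_left _ hbz, Int.mul_ediv_cancel_left _ hbz]
    change (N : ℤ) ∣ (d * x') * v - (d * y') * u
    rw [hM]
    push_cast
    have e : (d * x') * v - (d * y') * u = (d : ℤ) * (x' * v - y' * u) := by ring
    rw [e]
    exact mul_dvd_mul_left (d : ℤ) hL
  have hb2 : b = 1 := by omega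
  rw [hb, hb2, mul_one]
  exact_mod_cast hdN
end

section
/- Let p be a prime number and let u, v be integers not both divisible by p. Then there exist integers c, d with gcd(c, d) = 1, c·v ≡ d·u (mod p), and |c| + |d| ≤ √(2p). -/
lemma aux_pigeon (p : ℕ) (hp : p.Prime) (hp2 : p ≠ 2) (u v : ℤ) :
    ∃ c d : ℤ, (c ≠ 0 ∨ d ≠ 0) ∧ (p : ℤ) ∣ c * v - d * u ∧ |c| + |d| ≤ (Nat.sqrt (2 * p) : ℤ) := by
  have : Fact p.Prime := ⟨hp⟩
  set n := Nat.sqrt (2 * p) with hn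
  have hlt : 2 * p < (n + 1) * (n + 1) := Nat.lt_succ_sqrt (2 * p)
  let f : ℕ × ℕ → ZMod 2 × ZMod p := fun z =>
    ((((z.1 : ℤ) - z.2 : ℤ) : ZMod 2), ((((z.1 : ℤ) + z.2) * v - ((z.1 : ℤ) - z.2) * u : ℤ) : ZMod p))
  obtain ⟨⟨a, b⟩, hab, ⟨a', b'⟩, hab', hne, hf⟩ :=
    Finset.exists_ne_map_eq_of_card_lt_of_maps_to
      (s := Finset.range (n + 1) ×ˢ Finset.range (n + 1)) (t := Finset.univ) (f := f)
      (by simpa [ZMod.card] using hlt) (by intro x _; simp)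
  simp only [f, Prod.mk.injEq] at hf
  obtain ⟨h1, h2⟩ := hf
  rw [ZMod.intCast_eq_intCast_iff_dvd_sub] at h1 h2
  simp only [Finset.mem_product, Finset.mem_range] at hab hab'
  obtain ⟨k, hk⟩ := h1
  have hne' : ¬ (a = a' ∧ b = b') := by simpa using hne
  push_cast at hk
  refine ⟨k + (b' - b), k, ?_, ?_, ?_⟩
  · omega
  · have hc : IsCoprime (p : ℤ) 2 := by
      have := (Nat.coprime_primes hp Nat.prime_two).2 hp2
      exact_mod_cast Nat.isCoprime_iff_coprime.2 this
    refine hc.dvd_of_dvd_mul_left ?_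
    refine h2.trans (dvd_of_eq ?_)
    linear_combination (v - u) * hk
  · rcases abs_cases (k + ((b' : ℤ) - b)) with h | h <;> rcases abs_cases k with h' | h' <;> omega

/-- Every point of `ℙ¹(𝔽_p)` has a coprime representative of ℓ¹-norm at most `√(2p)`. -/
theorem small_representative_prime (p : ℕ) (hp : p.Prime) (u v : ℤ)
    (huv : ¬((p : ℤ) ∣ u ∧ (p : ℤ) ∣ v)) :
    ∃ c d : ℤ, IsCoprime c d ∧ (p : ℤ) ∣ c * v - d * u ∧
      ((|c| + |d| : ℤ) : ℝ) ≤ Real.sqrt (2 * p) := by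
  by_cases hp2 : p = 2
  · subst hp2
    have h4 : Real.sqrt (2 * ((2 : ℕ) : ℝ)) = 2 := by
      rw [show (2 * ((2 : ℕ) : ℝ)) = 2 ^ 2 by norm_num]
      exact Real.sqrt_sq (by norm_num)
    rw [h4]
    push_cast at huv ⊢
    rcases Int.emod_two_eq_zero_or_one u with hu | hu <;>
      rcases Int.emod_two_eq_zero_or_one v with hv | hv
    · exact absurd ⟨Int.dvd_of_emod_eq_zero hu, Int.dvd_of_emod_eq_zero hv⟩ huv
    · exact ⟨0, 1, isCoprime_one_right, by omega, by norm_num⟩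
    · exact ⟨1, 0, isCoprime_one_left, by omega, by norm_num⟩
    · exact ⟨1, 1, isCoprime_one_left, by omega, by norm_num⟩
  obtain ⟨c, d, hne, hdvd, hle⟩ := aux_pigeon p hp hp2 u v
  have hn2 : Nat.sqrt (2 * p) * Nat.sqrt (2 * p) ≤ 2 * p := Nat.sqrt_le _
  have hp3 : 2 < p := lt_of_le_of_ne hp.two_le (Ne.symm hp2)
  have hnp : Nat.sqrt (2 * p) < p := by
    rw [Nat.sqrt_lt]; nlinarith
  have hg : 0 < Int.gcd c d := by
    rw [Int.gcd_pos_iff]; exact hne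
  obtain ⟨c', hc'⟩ := Int.gcd_dvd_left c d
  obtain ⟨d', hd'⟩ := Int.gcd_dvd_right c d
  have hcop := Int.isCoprime_iff_gcd_eq_one.2 (Int.gcd_div_gcd_div_gcd hg)
  set g := Int.gcd c d with hgdef
  have hgZ : (0 : ℤ) < g := by exact_mod_cast hg
  have hcc : c / g = c' := by
    rw [hc']; exact Int.mul_ediv_cancel_left _ hgZ.ne'
  have hdd : d / g = d' := by
    rw [hd']; exact Int.mul_ediv_cancel_left _ hgZ.ne'
  rw [hcc, hdd] at hcop
  have hac : |c| = g * |c'| := by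
    conv_lhs => rw [hc']
    rw [abs_mul, abs_of_pos hgZ]
  have had : |d| = g * |d'| := by
    conv_lhs => rw [hd']
    rw [abs_mul, abs_of_pos hgZ]
  have hpos : 1 ≤ |c'| + |d'| := by
    by_contra h
    have h1 := abs_nonneg c'
    have h2 := abs_nonneg d'
    have h3 : c' = 0 := abs_eq_zero.1 (by omega)
    have h4 : d' = 0 := abs_eq_zero.1 (by omega)
    rw [h3, mul_zero] at hc'
    rw [h4, mul_zero] at hd'
    omega
  have hgle : (g : ℤ) ≤ Nat.sqrt (2 * p) := by nlinarith
  have hle' : |c'| + |d'| ≤ (Nat.sqrt (2 * p) : ℤ) := by nlinarith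
  refine ⟨c', d', hcop, ?_, ?_⟩
  · have hpg : IsCoprime (p : ℤ) (g : ℤ) := by
      rw [Nat.isCoprime_iff_coprime]
      exact Nat.coprime_of_lt_prime hg.ne' (by omega) hp
    refine hpg.dvd_of_dvd_mul_left ?_
    refine hdvd.trans (dvd_of_eq ?_)
    linear_combination v * hc' - u * hd'
  · apply Real.le_sqrt_of_sq_le
    have h0 : 0 ≤ |c'| + |d'| := by positivity
    have h5 : (|c'| + |d'|) ^ 2 ≤ 2 * (p : ℤ) := by
      have : ((Nat.sqrt (2 * p) : ℤ)) * (Nat.sqrt (2 * p) : ℤ) ≤ 2 * p := by exact_mod_cast hn2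
      nlinarith
    exact_mod_cast h5
end

section
/- Let N be a positive integer and let (x, y) ∈ ℤ² with gcd(x, y) = 1 and x² + y² < N. Then (x, y) is a shortest nonzero vector of the lattice Λ_{(x:y)}: every (c, d) ∈ ℤ² with c·y ≡ d·x (mod N) and c² + d² < x² + y² equals (0, 0). -/
/-- A coprime vector `(x, y)` with `x² + y² < N` is a shortest nonzero vector
of the lattice `Λ_{(x:y)}` of level `N`. -/
theorem coprime_short_vector_is_minimal (N : ℕ) (hN : 0 < N) (x y : ℤ)
    (hxy : IsCoprime x y) (hlt : x ^ 2 + y ^ 2 < (N : ℤ)) :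
    ∀ c d : ℤ, (N : ℤ) ∣ c * y - d * x → c ^ 2 + d ^ 2 < x ^ 2 + y ^ 2 →
      c = 0 ∧ d = 0 := by
  intro c d hdvd hs
  have h0 : c * y - d * x = 0 := by
    apply Int.eq_zero_of_abs_lt_dvd hdvd
    rw [abs_lt]
    constructor
    · nlinarith [sq_nonneg (c + y), sq_nonneg (d - x)]
    · nlinarith [sq_nonneg (c - y), sq_nonneg (d + x)]
  obtain ⟨a, b, hab⟩ := hxy
  obtain ⟨k, hk⟩ : ∃ k, k = a * c + b * d := ⟨_, rfl⟩
  have hc : c = k * x := by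
    rw [hk]; linear_combination (-c) * hab + b * h0
  have hd : d = k * y := by
    rw [hk]; linear_combination (-d) * hab - a * h0
  have hk0 : k = 0 := by
    by_contra hne
    have h1 : 1 ≤ k ^ 2 := by
      have : 0 < k ^ 2 := by positivity
      omega
    rw [hc, hd] at hs
    nlinarith [mul_nonneg (sub_nonneg.2 h1) (add_nonneg (sq_nonneg x) (sq_nonneg y))]
  simp [hc, hd, hk0]
end
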